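/- For all integers m, n, u, k with u ≥ 0, k ≥ 2, n ≥ 2 and m ≥ max{u+1, (k-1)(n-1)}, the determinant D(m,n,u,k) equals the number of lattice paths in L(u+1,1;m,n;k). -/

import Mathlib

/-- Binomial coefficient `C(a,b)` for integers, with the convention that it is `0` when `b < 0`. -/
def ichoose (a b : ℤ) : ℤ := if 0 ≤ b then (a.toNat.choose b.toNat : ℤ) else 0

/-- The determinant `D(m,n,u,k)` of the `(n-1)×(n-1)` matrix with `(i,j)` entry
`C(m - max{u, (k-1)j}, 1 - i + j)` for `i, j = 1, …, n-1`. -/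
def D (m n u k : ℤ) : ℤ :=
  Matrix.det (Matrix.of fun i j : Fin (n - 1).toNat =>
    ichoose (m - max u ((k - 1) * ((j : ℤ) + 1))) (1 - ((i : ℤ) + 1) + ((j : ℤ) + 1)))

/-- `L(u+1,1;m,n;k)`: lattice paths from `(u+1,1)` to `(m,n)` with unit steps `(1,0)` and `(0,1)`
(encoded as the list of steps, `true` = `(1,0)`, `false` = `(0,1)`) such that every point `(x,y)`
on the path satisfies `(k-1)(y-1) ≤ x-1`. -/
def L (u k m n : ℤ) : Set (List Bool) :=
  { s | (u + 1) + (s.count true : ℤ) = m ∧ 1 + (s.count false : ℤ) = n ∧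
        ∀ t, t <+: s →
          (k - 1) * ((1 + (t.count false : ℤ)) - 1) ≤ ((u + 1) + (t.count true : ℤ)) - 1 }

/-!
Reading a path backwards gives Pascal's rule for the number `F j x` of paths ending at `(x, j + 1)`,
valid strictly to the right of the boundary column `b (j + 1) = max u ((k - 1) (j + 1))`, on which
`F (j + 1)` vanishes. Solving the rule for the value to the left and moving from column `m` to the
boundary expresses `0 = F (j + 1) (b (j + 1))` as a binomial combination of the values in column
`m`: the vector `((-1) ^ i * F i m)` annihilates the columns of the Hessenberg matrix of `D`,
extended by one row. Such a relation determines the determinant as its last coefficient.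
-/

section Hessenberg

variable {R : Type*} [CommRing R] {N : ℕ} {a : ℕ → ℕ → R}

theorem det_updateRow_zero_of_hessenberg (hessenberg : ∀ i j, j + 1 < i → a i j = 0) (c : R) :
    ((Matrix.of fun i j : Fin (N + 1) => a i j).updateRow 0
        fun j => c * a (N + 1) j).det =
      (-1) ^ N * c * ∏ j ∈ Finset.range (N + 1), a (j + 1) j := by
  set A := Matrix.of fun i j : Fin (N + 1) => a i j
  have row_eq_zero (j : Fin (N + 1)) (hj : j ≠ Fin.last N) : a (N + 1) j = 0 :=
    hessenberg _ _ (by have := Fin.val_lt_last hj; omega)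
  have minor_triangular : (A.submatrix Fin.succ Fin.castSucc).IsUpperTriangular := by
    intro i j hij
    have hij : (j : ℕ) < i := hij
    exact hessenberg _ _ (by simpa using hij)
  have minor_det : (A.submatrix Fin.succ Fin.castSucc).det =
      ∏ j ∈ Finset.range N, a (j + 1) j := by
    rw [Matrix.det_of_isUpperTriangular minor_triangular, Finset.prod_range]
    rfl
  rw [Matrix.det_succ_row_zero, Finset.sum_eq_single (Fin.last N)]
  · rw [Fin.succAbove_last, Matrix.updateRow_self, ← Fin.succAbove_zero,
      Matrix.submatrix_updateRow_succAbove, Fin.succAbove_zero, minor_det,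
      Finset.prod_range_succ, Fin.val_last]
    ring
  · intro j _ hj
    simp [row_eq_zero j hj]
  · simp

theorem coeff_zero_mul_det_of_hessenberg (hessenberg : ∀ i j, j + 1 < i → a i j = 0) {w : ℕ → R}
    (relation : ∀ j < N, ∑ i ∈ Finset.range (j + 2), w i * a i j = 0) :
    w 0 * (Matrix.of fun i j : Fin N => a i j).det =
      (-1) ^ N * w N * ∏ j ∈ Finset.range N, a (j + 1) j := by
  cases N with
  | zero => simp
  | succ N =>
    set A := Matrix.of fun i j : Fin (N + 1) => a i j with hA
    have row_sum : ∑ i : Fin (N + 1), w i • A i = fun j : Fin (N + 1) =>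
        -w (N + 1) * a (N + 1) j := by
      ext j
      have full_relation : ∑ i ∈ Finset.range (N + 2), w i * a i j = 0 := by
        rw [← relation j j.2]
        refine (Finset.sum_subset (Finset.range_mono (by omega)) fun i _ hi => ?_).symm
        rw [hessenberg i j (by rw [Finset.mem_range] at hi; omega), mul_zero]
      rw [Finset.sum_range_succ, Finset.sum_range] at full_relation
      simp only [Finset.sum_apply, Pi.smul_apply, smul_eq_mul, hA, Matrix.of_apply]
      linear_combination full_relation
    calc w 0 * A.det = (A.updateRow 0 (∑ i : Fin (N + 1), w i • A i)).det :=
          (Matrix.det_updateRow_sum A 0 fun i => w i).symm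
      _ = (-1) ^ N * -w (N + 1) * ∏ j ∈ Finset.range (N + 1), a (j + 1) j := by
          rw [row_sum, det_updateRow_zero_of_hessenberg hessenberg]
      _ = (-1) ^ (N + 1) * w (N + 1) * ∏ j ∈ Finset.range (N + 1), a (j + 1) j := by ring

end Hessenberg

theorem ichoose_natCast (a b : ℕ) : ichoose a b = a.choose b := by
  simp [ichoose]

theorem ichoose_of_neg {a b : ℤ} (hb : b < 0) : ichoose a b = 0 :=
  if_neg hb.not_ge

section PascalArray

variable {R : Type*} [CommRing R] {b : ℕ → ℤ} {F : ℕ → ℤ → R} {m : ℤ}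

open Finset in
theorem sum_antidiagonal_mul_choose_succ (g : ℕ → R) (s j : ℕ) :
    ∑ p ∈ antidiagonal (j + 1), g p.1 * (s + 1).choose p.2 =
      ∑ p ∈ antidiagonal (j + 1), g p.1 * s.choose p.2 +
        ∑ p ∈ antidiagonal j, g p.1 * s.choose p.2 := by
  simp only [Nat.sum_antidiagonal_succ', Nat.choose_succ_succ, Nat.cast_add, mul_add,
    sum_add_distrib, Nat.choose_zero_right]
  ring

open Finset in
theorem neg_one_pow_mul_pascal_eq_sum_antidiagonal (hb : ∀ j, b j ≤ b (j + 1) + 1)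
    (row_zero : ∀ x, b 0 ≤ x → F 0 x = 1)
    (pascal : ∀ j x, b (j + 1) ≤ x → F (j + 1) (x + 1) = F (j + 1) x + F j (x + 1))
    (s j : ℕ) (hs : b j ≤ m - s) :
    (-1) ^ j * F j (m - s) =
      ∑ p ∈ antidiagonal j, (-1) ^ p.1 * F p.1 m * (s.choose p.2 : R) := by
  induction s generalizing j with
  | zero =>
    cases j with
    | zero => simp
    | succ j => simp [Nat.sum_antidiagonal_succ']
  | succ s ih =>
    cases j with
    | zero => simpa [row_zero m (by omega)] using row_zero _ hs
    | succ j =>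
      have step : F (j + 1) (m - s) = F (j + 1) (m - (s + 1 : ℕ)) + F j (m - s) := by
        have := pascal j _ hs
        rwa [show m - ((s + 1 : ℕ) : ℤ) + 1 = m - s by push_cast; ring] at this
      rw [sum_antidiagonal_mul_choose_succ (fun i => (-1) ^ i * F i m), ← ih (j + 1) (by omega),
        ← ih j (by have := hb j; omega), step]
      ring

theorem sum_neg_one_pow_mul_ichoose_eq_zero (hb : ∀ j, b j ≤ b (j + 1) + 1)
    (row_zero : ∀ x, b 0 ≤ x → F 0 x = 1)
    (pascal : ∀ j x, b (j + 1) ≤ x → F (j + 1) (x + 1) = F (j + 1) x + F j (x + 1))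
    {j : ℕ} (boundary : F (j + 1) (b (j + 1)) = 0) (hm : b (j + 1) ≤ m) :
    ∑ i ∈ Finset.range (j + 2),
      (-1) ^ i * F i m * (ichoose (m - b (j + 1)) ((j : ℤ) + 1 - i) : R) = 0 := by
  obtain ⟨s, hs⟩ := Int.eq_ofNat_of_zero_le (sub_nonneg.mpr hm)
  have expansion := neg_one_pow_mul_pascal_eq_sum_antidiagonal (m := m) hb row_zero pascal s (j + 1)
    (by omega)
  rw [show m - (s : ℤ) = b (j + 1) by omega, boundary, mul_zero,
    Finset.Nat.sum_antidiagonal_eq_sum_range_succ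
      (fun i l => (-1) ^ i * F i m * (s.choose l : R))] at expansion
  rw [expansion]
  refine Finset.sum_congr rfl fun i hi => ?_
  have offset : (j : ℤ) + 1 - i = ((j + 1 - i : ℕ) : ℤ) := by
    have := Finset.mem_range.mp hi
    omega
  simp only [hs, offset, ichoose_natCast, Int.cast_natCast]

theorem det_ichoose_eq_of_pascal (hb : ∀ j, b j ≤ b (j + 1) + 1)
    (row_zero : ∀ x, b 0 ≤ x → F 0 x = 1)
    (pascal : ∀ j x, b (j + 1) ≤ x → F (j + 1) (x + 1) = F (j + 1) x + F j (x + 1))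
    (boundary : ∀ j, F (j + 1) (b (j + 1)) = 0) {N : ℕ} (hm : ∀ j ≤ N, b j ≤ m) :
    (Matrix.of fun i j : Fin N => (ichoose (m - b (j + 1)) ((j : ℤ) + 1 - i) : R)).det = F N m := by
  set a : ℕ → ℕ → R := fun i j => ichoose (m - b (j + 1)) ((j : ℤ) + 1 - i) with ha
  have subdiagonal (j : ℕ) : a (j + 1) j = 1 := by simp [ha, ichoose]
  have hessenberg (i j : ℕ) (hij : j + 1 < i) : a i j = 0 := by
    simp only [ha]
    rw [ichoose_of_neg (by omega), Int.cast_zero]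
  have det_eq := coeff_zero_mul_det_of_hessenberg (N := N) (w := fun i => (-1) ^ i * F i m)
    hessenberg fun j hj =>
      sum_neg_one_pow_mul_ichoose_eq_zero hb row_zero pascal (boundary j) (hm (j + 1) hj)
  simpa [subdiagonal, row_zero m (hm 0 N.zero_le), ← mul_assoc, ← mul_pow] using det_eq

end PascalArray

section LatticePaths

variable {u k m n x : ℤ} {s : List Bool}

theorem finite_L (u k m n : ℤ) : (L u k m n).Finite := by
  refine (List.finite_length_eq Bool ((m - u - 1) + (n - 1)).toNat).subset ?_
  rintro s ⟨hm, hn, -⟩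
  have := List.count_true_add_count_false s
  simp only [Set.mem_ofPred_eq]
  omega

theorem L_eq_empty_of_lt_one (h : n < 1) : L u k m n = ∅ :=
  Set.eq_empty_of_forall_notMem fun _ ⟨_, hn, _⟩ => by omega

theorem L_eq_empty_of_le_max (h : m ≤ max u ((k - 1) * (n - 1))) : L u k m n = ∅ := by
  refine Set.eq_empty_of_forall_notMem fun s ⟨hm, hn, hprefix⟩ => ?_
  have endpoint := hprefix s List.prefix_rfl
  rw [hm, hn] at endpoint
  omega

theorem L_start (hu : 0 ≤ u) : L u k (u + 1) 1 = {[]} := by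
  ext s
  constructor
  · rintro ⟨hm, hn, -⟩
    have := List.count_true_add_count_false s
    exact List.eq_nil_of_length_eq_zero (by omega)
  · rintro rfl
    simp [L, hu]

theorem append_true_mem_L_iff :
    s ++ [true] ∈ L u k (x + 1) n ↔ (k - 1) * (n - 1) ≤ x ∧ s ∈ L u k x n := by
  have count_true : (s ++ [true]).count true = s.count true + 1 := by simp
  have count_false : (s ++ [true]).count false = s.count false := by simp
  simp only [L, Set.mem_ofPred_eq, List.prefix_concat_iff, forall_eq_or_imp, count_true,
    count_false]
  grind

theorem append_false_mem_L_iff :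
    s ++ [false] ∈ L u k (x + 1) (n + 1) ↔ (k - 1) * n ≤ x ∧ s ∈ L u k (x + 1) n := by
  have count_true : (s ++ [false]).count true = s.count true := by simp
  have count_false : (s ++ [false]).count false = s.count false + 1 := by simp
  simp only [L, Set.mem_ofPred_eq, List.prefix_concat_iff, forall_eq_or_imp, count_true,
    count_false]
  grind

theorem L_eq_image_union_image (hx : (k - 1) * n ≤ x) (start : x ≠ u ∨ n ≠ 0) :
    L u k (x + 1) (n + 1) =
      (· ++ [true]) '' L u k x (n + 1) ∪ (· ++ [false]) '' L u k (x + 1) n := by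
  ext s
  rcases List.eq_nil_or_concat s with rfl | ⟨t, step, rfl⟩
  · have : [] ∉ L u k (x + 1) (n + 1) := by
      rintro ⟨hm, hn, -⟩
      rw [List.count_nil] at hm hn
      omega
    simp [this]
  · cases step <;> simp [append_true_mem_L_iff, append_false_mem_L_iff, hx]

theorem ncard_L_pascal (hx : (k - 1) * n ≤ x) (start : x ≠ u ∨ n ≠ 0) :
    (L u k (x + 1) (n + 1)).ncard = (L u k x (n + 1)).ncard + (L u k (x + 1) n).ncard := by
  rw [L_eq_image_union_image hx start, Set.ncard_union_eq ?_ ((finite_L ..).image _)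
      ((finite_L ..).image _), Set.ncard_image_of_injective _ (List.append_left_injective _),
    Set.ncard_image_of_injective _ (List.append_left_injective _)]
  rw [Set.disjoint_left]
  rintro _ ⟨s, _, rfl⟩ ⟨t, _, hts⟩
  simp at hts

theorem ncard_L_one (hu : 0 ≤ u) (hm : u + 1 ≤ m) : (L u k m 1).ncard = 1 := by
  induction m, hm using Int.leInduction with
  | base => rw [L_start hu, Set.ncard_singleton]
  | succ m hm ih =>
    have pascal := ncard_L_pascal (u := u) (k := k) (n := 0) (x := m) (by omega) (.inl (by omega))
    rwa [zero_add, ih, L_eq_empty_of_lt_one zero_lt_one, Set.ncard_empty] at pascal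

end LatticePaths

theorem monotone_max_mul_natCast {u : ℤ} (hu : 0 ≤ u) (c : ℤ) :
    Monotone fun j : ℕ => max u (c * j) := by
  refine monotone_nat_of_le_succ fun j => max_le (le_max_left _ _) ?_
  rcases le_total c 0 with hc | hc
  · exact le_max_of_le_left ((mul_nonpos_of_nonpos_of_nonneg hc (by positivity)).trans hu)
  · exact le_max_of_le_right (by gcongr; omega)

/-- The column from which Pascal's rule fills the row `y = j + 1` of path counts. For `j ≥ 1` it is
the column just left of the admissible points, where the count is zero; for `j = 0` it is that of
the initial point `(u + 1, 1)`, from which on the count is one. -/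
def pascalBoundary (u k : ℤ) : ℕ → ℤ
  | 0 => u + 1
  | j + 1 => max u ((k - 1) * (j + 1 : ℕ))

-- Row `y = 1` starts at column `u + 1`, row `y = 2` possibly at column `u`: hence the slack of one.
theorem pascalBoundary_le_succ_add_one {u : ℤ} (hu : 0 ≤ u) (k : ℤ) :
    ∀ j, pascalBoundary u k j ≤ pascalBoundary u k (j + 1) + 1
  | 0 => by simp [pascalBoundary]
  | j + 1 => (monotone_max_mul_natCast hu (k - 1) (j + 1).le_succ).trans (by simp [pascalBoundary])

theorem pascalBoundary_le {u k m : ℤ} {N : ℕ} (hu : 0 ≤ u) (hm : max (u + 1) ((k - 1) * N) ≤ m) :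
    ∀ j ≤ N, pascalBoundary u k j ≤ m
  | 0, _ => (le_max_left _ _).trans hm
  | _ + 1, hj => (monotone_max_mul_natCast hu (k - 1) hj).trans <|
      (max_le_max_right _ (by omega)).trans hm

theorem det_eq_card_L_general (m n u k : ℤ) (hu : 0 ≤ u) (hn : 1 ≤ n)
    (hm : max (u + 1) ((k - 1) * (n - 1)) ≤ m) :
    D m n u k = ((L u k m n).ncard : ℤ) := by
  obtain ⟨N, rfl⟩ : ∃ N : ℕ, n = N + 1 := ⟨(n - 1).toNat, by omega⟩
  rw [add_sub_cancel_right] at hm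
  set F : ℕ → ℤ → ℤ := fun j x => (L u k x (j + 1)).ncard
  have row_zero (x : ℤ) (hx : pascalBoundary u k 0 ≤ x) : F 0 x = 1 := by
    simpa [F] using ncard_L_one hu hx
  have pascal (j : ℕ) (x : ℤ) (hx : pascalBoundary u k (j + 1) ≤ x) :
      F (j + 1) (x + 1) = F (j + 1) x + F j (x + 1) := by
    have hx : (k - 1) * (j + 1 : ℕ) ≤ x := (le_max_right _ _).trans hx
    simp only [F]
    exact_mod_cast ncard_L_pascal hx (.inr (by omega))
  have boundary (j : ℕ) : F (j + 1) (pascalBoundary u k (j + 1)) = 0 := by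
    simp [F, L_eq_empty_of_le_max, pascalBoundary]
  have det_eq := det_ichoose_eq_of_pascal (pascalBoundary_le_succ_add_one hu k) row_zero pascal
    boundary (pascalBoundary_le hu hm)
  change D m (N + 1) u k = F N m
  rw [← det_eq, D, add_sub_cancel_right, Int.toNat_natCast]
  congr 1
  ext i j
  simp only [Matrix.of_apply, Int.cast_id, pascalBoundary, Nat.cast_succ]
  congr 1
  ring

theorem det_eq_card_L (m n u k : ℤ) (hu : 0 ≤ u) (hk : 2 ≤ k) (hn : 2 ≤ n)
    (hm : max (u + 1) ((k - 1) * (n - 1)) ≤ m) :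
    D m n u k = ((L u k m n).ncard : ℤ) :=
  det_eq_card_L_general m n u k hu (by omega) hm
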